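/- Let S₁, …, S_k be finite sets such that |S_i ∩ S_j| ≤ 1 for all i ≠ j, and let T be any finite set. Then Σ_{i=1}^{k} |S_i ∩ T| ≤ |T| + k·√|T|. -/

import Mathlib

/-!
Let `d t` be the number of indices `i` with `t ∈ S i`, and let `N = ∑ t ∈ T, d t` be the sum to be
bounded. Counting pairs of indices, `∑ t ∈ T, d t ^ 2 = ∑ i, ∑ j, |S i ∩ S j ∩ T|`, whose diagonal
part is `N` and whose off-diagonal part is at most `k ^ 2`. The Cauchy–Schwarz inequality then gives
`N ^ 2 ≤ |T| * (N + k ^ 2)`, and solving this quadratic inequality for `N` bounds it by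
`|T| + k * √|T|`.
-/

theorem le_add_sqrt_of_sq_le_mul_add {x b c : ℝ} (hc : 0 ≤ c) (h : x ^ 2 ≤ c * x + b) :
    x ≤ c + √b := by
  rcases le_total x c with hxc | hcx
  · exact le_add_of_le_of_nonneg hxc (Real.sqrt_nonneg b)
  · have hsq : (x - c) ^ 2 ≤ b :=
      calc (x - c) ^ 2 = x ^ 2 - c * x - c * (x - c) := by ring
        _ ≤ x ^ 2 - c * x := sub_le_self _ (mul_nonneg hc (sub_nonneg.2 hcx))
        _ ≤ b := by linarith
    exact sub_le_iff_le_add'.1 (Real.le_sqrt_of_sq_le hsq)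

section Incidences

open Finset

variable {ι α : Type*} [DecidableEq α] (s : Finset ι) (S : ι → Finset α) (T : Finset α)

theorem sum_card_inter_eq_sum_card_filter_mem :
    ∑ i ∈ s, #(S i ∩ T) = ∑ t ∈ T, #{i ∈ s | t ∈ S i} :=
  calc ∑ i ∈ s, #(S i ∩ T) = ∑ i ∈ s, #{t ∈ T | t ∈ S i} := by
        simp only [filter_mem_eq_inter, inter_comm T]
    _ = ∑ t ∈ T, #{i ∈ s | t ∈ S i} :=
        sum_card_bipartiteAbove_eq_sum_card_bipartiteBelow fun i t ↦ t ∈ S i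

theorem sum_card_filter_mem_sq :
    ∑ t ∈ T, #{i ∈ s | t ∈ S i} ^ 2 = ∑ p ∈ s ×ˢ s, #(S p.1 ∩ S p.2 ∩ T) := by
  rw [sum_card_inter_eq_sum_card_filter_mem (s ×ˢ s) fun p ↦ S p.1 ∩ S p.2]
  refine sum_congr rfl fun t _ ↦ ?_
  simp only [mem_inter, filter_product (t ∈ S ·) (t ∈ S ·), card_product, sq]

variable {s S T} {m : ℕ}

theorem sum_product_card_inter_le
    (hS : (s : Set ι).Pairwise fun i j ↦ #(S i ∩ S j ∩ T) ≤ m) :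
    ∑ p ∈ s ×ˢ s, #(S p.1 ∩ S p.2 ∩ T) ≤ ∑ i ∈ s, #(S i ∩ T) + #s * (#s - 1) * m := by
  classical
  have hoff : ∑ p ∈ s.offDiag, #(S p.1 ∩ S p.2 ∩ T) ≤ #s * (#s - 1) * m := by
    rw [Nat.mul_sub_one, ← offDiag_card]
    refine sum_le_card_nsmul _ _ _ fun p hp ↦ ?_
    obtain ⟨hi, hj, hij⟩ := mem_offDiag.1 hp
    exact hS hi hj hij
  rw [← diag_union_offDiag, sum_union (disjoint_diag_offDiag s), sum_diag]
  simpa only [inter_self] using Nat.add_le_add_left hoff _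

theorem sq_sum_card_inter_le
    (hS : (s : Set ι).Pairwise fun i j ↦ #(S i ∩ S j ∩ T) ≤ m) :
    (∑ i ∈ s, #(S i ∩ T)) ^ 2 ≤ #T * (∑ i ∈ s, #(S i ∩ T) + #s * (#s - 1) * m) :=
  calc (∑ i ∈ s, #(S i ∩ T)) ^ 2
      = (∑ t ∈ T, #{i ∈ s | t ∈ S i}) ^ 2 := by rw [sum_card_inter_eq_sum_card_filter_mem]
    _ ≤ #T * ∑ t ∈ T, #{i ∈ s | t ∈ S i} ^ 2 := sq_sum_le_card_mul_sum_sq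
    _ = #T * ∑ p ∈ s ×ˢ s, #(S p.1 ∩ S p.2 ∩ T) := by rw [sum_card_filter_mem_sq]
    _ ≤ #T * (∑ i ∈ s, #(S i ∩ T) + #s * (#s - 1) * m) :=
        Nat.mul_le_mul_left _ (sum_product_card_inter_le hS)

theorem sum_inter_card_le_general
    (hS : (s : Set ι).Pairwise fun i j ↦ #(S i ∩ S j ∩ T) ≤ m) :
    ∑ i ∈ s, (#(S i ∩ T) : ℝ) ≤ #T + #s * √(m * #T) := by
  have hquad : (∑ i ∈ s, #(S i ∩ T)) ^ 2 ≤ #T * ∑ i ∈ s, #(S i ∩ T) + #s ^ 2 * (m * #T) :=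
    calc (∑ i ∈ s, #(S i ∩ T)) ^ 2
        ≤ #T * (∑ i ∈ s, #(S i ∩ T) + #s * (#s - 1) * m) := sq_sum_card_inter_le hS
      _ ≤ #T * (∑ i ∈ s, #(S i ∩ T) + #s * #s * m) := by gcongr; exact Nat.sub_le _ _
      _ = #T * ∑ i ∈ s, #(S i ∩ T) + #s ^ 2 * (m * #T) := by ring
  calc ∑ i ∈ s, (#(S i ∩ T) : ℝ)
      ≤ #T + √((#s : ℝ) ^ 2 * (m * #T)) :=
        le_add_sqrt_of_sq_le_mul_add (Nat.cast_nonneg _) (mod_cast hquad)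
    _ = #T + #s * √(m * #T) := by
        rw [Real.sqrt_mul (sq_nonneg _), Real.sqrt_sq (Nat.cast_nonneg _)]

end Incidences

/-- **Pairwise almost-disjoint sets cannot all intersect a set much more than `√|T|`.**
If `S₁, …, S_k` are finite sets with `|Sᵢ ∩ Sⱼ| ≤ 1` for `i ≠ j`, then for every finite set
`T`, `Σᵢ |Sᵢ ∩ T| ≤ |T| + k·√|T|` (over the reals). -/
theorem sum_inter_card_le {α : Type*} [DecidableEq α] (k : ℕ)
    (S : Fin k → Finset α) (hS : ∀ i j, i ≠ j → (S i ∩ S j).card ≤ 1) (T : Finset α) :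
    ∑ i, ((S i ∩ T).card : ℝ) ≤ (T.card : ℝ) + k * Real.sqrt T.card := by
  simpa using sum_inter_card_le_general (s := Finset.univ) (m := 1) fun i _ j _ hij ↦
    (Finset.card_le_card Finset.inter_subset_left).trans (hS i j hij)
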